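/- Given a finite Markov decision process with R = max_{s,a} |r(s,a)|, fix β > 0, let V₀ : S → ℝ be arbitrary, and define V_{k+1} = T_β V_k. Then for every k ≥ 0, max_s V_k(s) − min_s V_k(s) ≤ 2R·(1−γ^k)/(1−γ) + γ^k·(max_s V₀(s) − min_s V₀(s)). -/

import Mathlib

/-!
The Boltzmann softmax `boltz β x` is a weighted average of the entries of `x` with positive weights,
so it lies between any lower and upper bounds of those entries (`le_boltz`, `boltz_le`). For a value
function with values in `[m, M]`, every `Qval` lies in `[-R + γ m, R + γ M]`, hence so does every
value of `Tb`. One iteration therefore sends the range `D` to at most `2 R + γ D`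
(`fmax_sub_fmin_Tb_le`); iterating this affine recursion and summing the geometric series gives
the bound.
-/

noncomputable def boltz {ι : Type*} [Fintype ι] (β : ℝ) (x : ι → ℝ) : ℝ :=
  (∑ i, Real.exp (β * x i) * x i) / ∑ i, Real.exp (β * x i)

noncomputable def fmax {ι : Type*} [Fintype ι] [Nonempty ι] (x : ι → ℝ) : ℝ :=
  Finset.univ.sup' Finset.univ_nonempty x

noncomputable def fmin {ι : Type*} [Fintype ι] [Nonempty ι] (x : ι → ℝ) : ℝ :=
  Finset.univ.inf' Finset.univ_nonempty x

noncomputable def Qval {S A : Type*} [Fintype S] (p : S → A → S → ℝ) (r : S → A → ℝ)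
    (γ : ℝ) (V : S → ℝ) (s : S) (a : A) : ℝ :=
  r s a + γ * ∑ s', p s a s' * V s'

noncomputable def Tm {S A : Type*} [Fintype S] [Fintype A] [Nonempty A]
    (p : S → A → S → ℝ) (r : S → A → ℝ) (γ : ℝ) (V : S → ℝ) (s : S) : ℝ :=
  fmax (Qval p r γ V s)

noncomputable def Tb {S A : Type*} [Fintype S] [Fintype A]
    (p : S → A → S → ℝ) (r : S → A → ℝ) (γ : ℝ) (β : ℝ) (V : S → ℝ) (s : S) : ℝ :=
  boltz β (Qval p r γ V s)

noncomputable def supNorm {S : Type*} [Fintype S] [Nonempty S] (V : S → ℝ) : ℝ :=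
  fmax (fun s => |V s|)

theorem boltz_le {ι : Type*} [Fintype ι] [Nonempty ι] (β : ℝ) (x : ι → ℝ) (M : ℝ)
    (h : ∀ i, x i ≤ M) : boltz β x ≤ M := by
  have hpos : 0 < ∑ i, Real.exp (β * x i) :=
    Finset.sum_pos (fun i _ => Real.exp_pos _) Finset.univ_nonempty
  rw [boltz, div_le_iff₀ hpos, mul_comm, Finset.sum_mul]
  exact Finset.sum_le_sum fun i _ => mul_le_mul_of_nonneg_left (h i) (Real.exp_pos _).le

theorem le_boltz {ι : Type*} [Fintype ι] [Nonempty ι] (β : ℝ) (x : ι → ℝ) (m : ℝ)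
    (h : ∀ i, m ≤ x i) : m ≤ boltz β x := by
  have hpos : 0 < ∑ i, Real.exp (β * x i) :=
    Finset.sum_pos (fun i _ => Real.exp_pos _) Finset.univ_nonempty
  rw [boltz, le_div_iff₀ hpos, mul_comm, Finset.sum_mul]
  exact Finset.sum_le_sum fun i _ => mul_le_mul_of_nonneg_left (h i) (Real.exp_pos _).le

theorem le_fmax {ι : Type*} [Fintype ι] [Nonempty ι] (x : ι → ℝ) (i : ι) : x i ≤ fmax x :=
  Finset.le_sup' x (Finset.mem_univ i)

theorem fmin_le {ι : Type*} [Fintype ι] [Nonempty ι] (x : ι → ℝ) (i : ι) : fmin x ≤ x i :=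
  Finset.inf'_le x (Finset.mem_univ i)

/-- One step of Boltzmann value iteration maps the range `D` of a value function to at most
`2 * R + γ * D`, where `R` bounds the absolute rewards. -/
theorem fmax_sub_fmin_Tb_le {S A : Type*} [Fintype S] [Fintype A] [Nonempty S] [Nonempty A]
    (p : S → A → S → ℝ) (hp0 : ∀ s a s', 0 ≤ p s a s') (hp1 : ∀ s a, ∑ s', p s a s' = 1)
    (r : S → A → ℝ) (γ : ℝ) (hγ0 : 0 ≤ γ) (R : ℝ) (hR : ∀ s a, |r s a| ≤ R)
    (β : ℝ) (V : S → ℝ) :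
    fmax (Tb p r γ β V) - fmin (Tb p r γ β V) ≤ 2 * R + γ * (fmax V - fmin V) := by
  have hup : fmax (Tb p r γ β V) ≤ R + γ * fmax V := by
    refine Finset.sup'_le _ _ fun s _ => boltz_le _ _ _ fun a => ?_
    have havg : ∑ s', p s a s' * V s' ≤ fmax V := by
      calc ∑ s', p s a s' * V s' ≤ ∑ s', p s a s' * fmax V :=
            Finset.sum_le_sum fun s' _ => mul_le_mul_of_nonneg_left (le_fmax V s') (hp0 s a s')
        _ = fmax V := by rw [← Finset.sum_mul, hp1, one_mul]
    exact add_le_add (abs_le.mp (hR s a)).2 (mul_le_mul_of_nonneg_left havg hγ0)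
  have hlow : -R + γ * fmin V ≤ fmin (Tb p r γ β V) := by
    refine Finset.le_inf' _ _ fun s _ => le_boltz _ _ _ fun a => ?_
    have havg : fmin V ≤ ∑ s', p s a s' * V s' := by
      calc fmin V = ∑ s', p s a s' * fmin V := by rw [← Finset.sum_mul, hp1, one_mul]
        _ ≤ ∑ s', p s a s' * V s' :=
            Finset.sum_le_sum fun s' _ => mul_le_mul_of_nonneg_left (fmin_le V s') (hp0 s a s')
    exact add_le_add (abs_le.mp (hR s a)).1 (mul_le_mul_of_nonneg_left havg hγ0)
  linarith

theorem boltz_vi_range_bound {S A : Type*} [Fintype S] [Fintype A] [Nonempty S] [Nonempty A]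
    (p : S → A → S → ℝ) (hp0 : ∀ s a s', 0 ≤ p s a s') (hp1 : ∀ s a, ∑ s', p s a s' = 1)
    (r : S → A → ℝ) (γ : ℝ) (hγ0 : 0 ≤ γ) (hγ1 : γ < 1)
    (R : ℝ) (hR : R = fmax (fun sa : S × A => |r sa.1 sa.2|))
    (β : ℝ) (hβ : 0 < β)
    (V₀ : S → ℝ) (Vseq : ℕ → S → ℝ)
    (hV0 : Vseq 0 = V₀)
    (hVsucc : ∀ k, Vseq (k + 1) = Tb p r γ β (Vseq k)) :
    ∀ k : ℕ,
      fmax (Vseq k) - fmin (Vseq k)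
        ≤ 2 * R * (1 - γ ^ k) / (1 - γ) + γ ^ k * (fmax V₀ - fmin V₀) := by
  intro k
  have hRb : ∀ s a, |r s a| ≤ R := fun s a => by
    rw [hR]
    exact le_fmax (fun sa : S × A => |r sa.1 sa.2|) (s, a)
  have hγ : 1 - γ ≠ 0 := by linarith
  induction k with
  | zero => simp [hV0]
  | succ k ih =>
    rw [hVsucc]
    calc fmax (Tb p r γ β (Vseq k)) - fmin (Tb p r γ β (Vseq k))
        ≤ 2 * R + γ * (fmax (Vseq k) - fmin (Vseq k)) :=
          fmax_sub_fmin_Tb_le p hp0 hp1 r γ hγ0 R hRb β (Vseq k)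
      _ ≤ 2 * R + γ * (2 * R * (1 - γ ^ k) / (1 - γ) + γ ^ k * (fmax V₀ - fmin V₀)) := by
          gcongr
      _ = 2 * R * (1 - γ ^ (k + 1)) / (1 - γ) + γ ^ (k + 1) * (fmax V₀ - fmin V₀) := by
          field_simp
          ring
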